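/- Let T, d, p be positive integers and δ ≥ 0. Let ψ, ψ′ : {1,…,T} → ℝ^{p×d} be two convolution kernels, and for an input sequence u_1,…,u_T ∈ ℝ^d define the outputs f_ψ(u)_t = Σ_{i=1}^{t} ψ(i)·u_{t−i+1} and f_{ψ′}(u)_t = Σ_{i=1}^{t} ψ′(i)·u_{t−i+1}. If ‖f_ψ(u)_t − f_{ψ′}(u)_t‖₂ ≤ δ for every 1 ≤ t ≤ T and every input sequence with ‖u_i‖_∞ ≤ 1 for all i, then ‖(ψ(t) − ψ′(t))·v‖₂ ≤ 2δ for every 1 ≤ t ≤ T and every v ∈ ℝ^d with ‖v‖_∞ ≤ 1. -/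

import Mathlib

/-- Euclidean norm of a vector in `ℝ^p`. -/
noncomputable def vecNorm {p : ℕ} (v : Fin p → ℝ) : ℝ := Real.sqrt (∑ j, (v j) ^ 2)

theorem stmt11 (T d p : ℕ) (hT : 0 < T) (hd : 0 < d) (hp : 0 < p)
    (δ : ℝ) (hδ : 0 ≤ δ)
    (ψ ψ' : ℕ → Matrix (Fin p) (Fin d) ℝ)
    (hyp : ∀ u : ℕ → (Fin d → ℝ), (∀ i, ∀ j, |u i j| ≤ 1) →
      ∀ t, 1 ≤ t → t ≤ T →
        vecNorm ((∑ i ∈ Finset.Icc 1 t, (ψ i).mulVec (u (t - i + 1)))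
                 - ∑ i ∈ Finset.Icc 1 t, (ψ' i).mulVec (u (t - i + 1))) ≤ δ) :
    ∀ t, 1 ≤ t → t ≤ T → ∀ v : Fin d → ℝ, (∀ j, |v j| ≤ 1) →
      vecNorm ((ψ t - ψ' t).mulVec v) ≤ 2 * δ := by
  intro t ht1 htT v hv
  have h := hyp (fun n => if n = 1 then v else 0) (by
    intro i j
    by_cases hi : i = 1
    · simp [hi, hv j]
    · simp [hi]) t ht1 htT
  have key : ∀ φ : ℕ → Matrix (Fin p) (Fin d) ℝ,
      ∑ i ∈ Finset.Icc 1 t, (φ i).mulVec ((fun n => if n = 1 then v else 0) (t - i + 1))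
        = (φ t).mulVec v := by
    intro φ
    rw [Finset.sum_eq_single t]
    · simp
    · intro b hb hbt
      have hb2 := Finset.mem_Icc.mp hb
      have : t - b + 1 ≠ 1 := by omega
      simp only [this, if_false, Matrix.mulVec_zero]
    · intro hn
      exact absurd (Finset.mem_Icc.mpr ⟨ht1, le_refl t⟩) hn
  rw [key ψ, key ψ', ← Matrix.sub_mulVec] at h
  linarith
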